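/- arXiv:1510.05960 — 4 statements merged into one kernel-verified Lean document; each statement's English description precedes it below -/
import Mathlib

section
/- Let a = (a_1, …, a_d) with a_i ≥ 0 for all i, let w ∈ ℝ with 0 < |w| < 2π/α_d, and let t ∈ (0, 1]. Then J(t²·a, t·w) ≥ t² · J(a, w). (Since ‖t·pⁱ‖² = t²·‖pⁱ‖², this is the statement that the Jacobian determinant of the corank-1 Carnot exponential map satisfies J(t·p_x, t·p_z) ≥ t²·J(p_x, p_z).) -/
open Finset

/-- The Jacobian determinant of the exponential map of a corank-1 Carnot group
whose skew-symmetric matrix has nonzero singular values `α 0 ≤ … ≤ α (d-1)`,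
as a function of `a i = ‖pⁱ‖²` and `w = p_z`. -/
noncomputable def Jdet (d : ℕ) (α : Fin d → ℝ) (a : Fin d → ℝ) (w : ℝ) : ℝ :=
  2 ^ (2 * d) / ((∏ i, α i) ^ 2 * w ^ (2 * d + 2)) *
    ∑ i, a i * (∏ j ∈ univ.erase i, Real.sin (α j * w / 2) ^ 2) *
      Real.sin (α i * w / 2) *
      (Real.sin (α i * w / 2) - α i * w / 2 * Real.cos (α i * w / 2))

/-!
With `x i = α i * w / 2`, distributing the prefactor over the trigonometric factors gives
`J(a, w) = ∑ i, a i * (α i ^ 2 / 4) * (∏ j ≠ i, sinc (x j) ^ 2) * sinc (x i) * g (x i)`,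
where `g x = (sin x - x * cos x) / x ^ 3`. Both `sinc` and `g` are even, and on `(0, π]` they are
nonnegative and decreasing, so `J(a, w)` decreases in `|w|`. The factor `t ^ 2` comes from the
linearity of `J` in `a`.
-/

section Trigonometric

open Real Set

theorem sinc_abs (x : ℝ) : sinc |x| = sinc x := by
  rcases abs_choice x with h | h <;> simp only [h, sinc_neg]

theorem sinc_nonneg_of_abs_le_pi {x : ℝ} (hx : |x| ≤ π) : 0 ≤ sinc x := by
  rw [← sinc_abs, sinc_apply]
  split_ifs
  · exact zero_le_one
  · exact div_nonneg (sin_nonneg_of_nonneg_of_le_pi (abs_nonneg x) hx) (abs_nonneg x)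

theorem antitoneOn_sinc : AntitoneOn sinc (Icc 0 π) := by
  intro x hx y hy hxy
  rcases hx.1.eq_or_lt with rfl | hx_pos
  · simpa only [sinc_zero] using sinc_le_one y
  have hy_pos : 0 < y := hx_pos.trans_le hxy
  have hslope : slope sin 0 y ≤ slope sin 0 x :=
    strictConcaveOn_sin_Icc.concaveOn.slope_anti ⟨le_rfl, pi_pos.le⟩
      ⟨hx, hx_pos.ne'⟩ ⟨hy, hy_pos.ne'⟩ hxy
  simpa only [sinc_eq_dslope, dslope_of_ne _ hx_pos.ne', dslope_of_ne _ hy_pos.ne'] using hslope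

theorem sinc_le_sinc_of_abs_le {x y : ℝ} (hxy : |x| ≤ |y|) (hy : |y| ≤ π) :
    sinc y ≤ sinc x := by
  rw [← sinc_abs x, ← sinc_abs y]
  exact antitoneOn_sinc ⟨abs_nonneg x, hxy.trans hy⟩ ⟨abs_nonneg y, hy⟩ hxy

theorem hasDerivAt_sin_sub_mul_cos (x : ℝ) :
    HasDerivAt (fun y ↦ sin y - y * cos y) (x * sin x) x := by
  refine ((hasDerivAt_sin x).sub ((hasDerivAt_id' x).mul (hasDerivAt_cos x))).congr_deriv ?_
  ring

theorem sin_sub_mul_cos_nonneg {x : ℝ} (hx : x ∈ Icc 0 π) : 0 ≤ sin x - x * cos x := by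
  have hmono : MonotoneOn (fun y ↦ sin y - y * cos y) (Icc 0 π) := by
    refine monotoneOn_of_hasDerivWithinAt_nonneg (convex_Icc 0 π) (by fun_prop)
      (fun y _ ↦ (hasDerivAt_sin_sub_mul_cos y).hasDerivWithinAt) fun y hy ↦ ?_
    have hy' : y ∈ Icc 0 π := interior_subset hy
    exact mul_nonneg hy'.1 (sin_nonneg_of_mem_Icc hy')
  simpa using hmono ⟨le_rfl, pi_pos.le⟩ hx hx.1

theorem hasDerivAt_sq_mul_sin_sub (x : ℝ) :
    HasDerivAt (fun y ↦ y ^ 2 * sin y - 3 * (sin y - y * cos y))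
      (-(x * (sin x - x * cos x))) x := by
  refine (((hasDerivAt_pow 2 x).mul (hasDerivAt_sin x)).sub
    ((hasDerivAt_sin_sub_mul_cos x).const_mul 3)).congr_deriv ?_
  push_cast
  ring

theorem sq_mul_sin_le_three_mul {x : ℝ} (hx : x ∈ Icc 0 π) :
    x ^ 2 * sin x ≤ 3 * (sin x - x * cos x) := by
  have hanti : AntitoneOn (fun y ↦ y ^ 2 * sin y - 3 * (sin y - y * cos y)) (Icc 0 π) := by
    refine antitoneOn_of_hasDerivWithinAt_nonpos (convex_Icc 0 π) (by fun_prop)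
      (fun y _ ↦ (hasDerivAt_sq_mul_sin_sub y).hasDerivWithinAt) fun y hy ↦ ?_
    have hy' : y ∈ Icc 0 π := interior_subset hy
    exact neg_nonpos.2 (mul_nonneg hy'.1 (sin_sub_mul_cos_nonneg hy'))
  simpa using hanti ⟨le_rfl, pi_pos.le⟩ hx hx.1

/-- The quotient `j₁(x) / x = -sinc' x / x`, where `j₁` is the spherical Bessel function of order
one. It is the factor of the Jacobian determinant that is not a power of `sinc`. At `x = 0` it
takes the junk value `0`, whereas its limit there is `1 / 3`. -/
noncomputable def sphericalBesselOneDiv (x : ℝ) : ℝ :=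
  (sin x - x * cos x) / x ^ 3

theorem sphericalBesselOneDiv_neg (x : ℝ) :
    sphericalBesselOneDiv (-x) = sphericalBesselOneDiv x := by
  simp only [sphericalBesselOneDiv, sin_neg, cos_neg, Odd.neg_pow (by decide : Odd 3)]
  rw [← neg_div_neg_eq]
  ring

theorem sphericalBesselOneDiv_abs (x : ℝ) :
    sphericalBesselOneDiv |x| = sphericalBesselOneDiv x := by
  rcases abs_choice x with h | h <;> simp only [h, sphericalBesselOneDiv_neg]

theorem sphericalBesselOneDiv_nonneg_of_abs_le_pi {x : ℝ} (hx : |x| ≤ π) :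
    0 ≤ sphericalBesselOneDiv x := by
  rw [← sphericalBesselOneDiv_abs]
  exact div_nonneg (sin_sub_mul_cos_nonneg ⟨abs_nonneg x, hx⟩) (by positivity)

theorem hasDerivAt_sphericalBesselOneDiv {x : ℝ} (hx : x ≠ 0) :
    HasDerivAt sphericalBesselOneDiv
      ((x ^ 2 * sin x - 3 * (sin x - x * cos x)) / x ^ 4) x := by
  refine ((hasDerivAt_sin_sub_mul_cos x).div (hasDerivAt_pow 3 x)
    (pow_ne_zero 3 hx)).congr_deriv ?_
  push_cast
  field_simp

theorem antitoneOn_sphericalBesselOneDiv : AntitoneOn sphericalBesselOneDiv (Ioc 0 π) := by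
  have hderiv {x : ℝ} (hx : x ∈ Ioc 0 π) := hasDerivAt_sphericalBesselOneDiv hx.1.ne'
  refine antitoneOn_of_hasDerivWithinAt_nonpos (convex_Ioc 0 π)
    (fun x hx ↦ (hderiv hx).continuousAt.continuousWithinAt)
    (fun x hx ↦ (hderiv (interior_subset hx)).hasDerivWithinAt) fun x hx ↦ ?_
  exact div_nonpos_of_nonpos_of_nonneg
    (sub_nonpos.2 (sq_mul_sin_le_three_mul (Ioc_subset_Icc_self (interior_subset hx))))
    (by positivity)

theorem sphericalBesselOneDiv_le_of_abs_le {x y : ℝ} (hx : x ≠ 0) (hxy : |x| ≤ |y|)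
    (hy : |y| ≤ π) : sphericalBesselOneDiv y ≤ sphericalBesselOneDiv x := by
  rw [← sphericalBesselOneDiv_abs x, ← sphericalBesselOneDiv_abs y]
  have hx_pos : 0 < |x| := abs_pos.2 hx
  exact antitoneOn_sphericalBesselOneDiv ⟨hx_pos, hxy.trans hy⟩ ⟨hx_pos.trans_le hxy, hy⟩ hxy

end Trigonometric

section Jacobian

open Real

variable {d : ℕ} {α a : Fin d → ℝ} {w : ℝ}

theorem Jdet_const_mul (α a : Fin d → ℝ) (w c : ℝ) :
    Jdet d α (fun i ↦ c * a i) w = c * Jdet d α a w := by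
  simp only [Jdet, mul_assoc, mul_left_comm _ c, ← mul_sum]

theorem prod_mul_div_two_sq (α : Fin d → ℝ) (w : ℝ) :
    ∏ i, (α i * w / 2) ^ 2 = (∏ i, α i) ^ 2 * w ^ (2 * d) / 2 ^ (2 * d) := by
  simp only [prod_pow, prod_div_distrib, prod_mul_distrib, prod_const, card_univ,
    Fintype.card_fin, div_pow, mul_pow, ← pow_mul, mul_comm d 2]

theorem Jdet_eq_sum_sinc (hα : ∀ i, α i ≠ 0) (hw : w ≠ 0) :
    Jdet d α a w = ∑ i, a i * (α i ^ 2 / 4) * (∏ j ∈ univ.erase i, sinc (α j * w / 2) ^ 2) *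
      sinc (α i * w / 2) * sphericalBesselOneDiv (α i * w / 2) := by
  have hx (i : Fin d) : α i * w / 2 ≠ 0 := by simp [hα i, hw]
  have prefactor_eq : 2 ^ (2 * d) / ((∏ i, α i) ^ 2 * w ^ (2 * d + 2)) =
      (w ^ 2 * ∏ i, (α i * w / 2) ^ 2)⁻¹ := by
    rw [prod_mul_div_two_sq, pow_add]
    field_simp
  rw [Jdet, prefactor_eq, mul_sum]
  refine sum_congr rfl fun i _ ↦ ?_
  have hprod : ∏ j ∈ univ.erase i, (α j * w / 2) ^ 2 ≠ 0 :=
    prod_ne_zero_iff.2 fun j _ ↦ pow_ne_zero 2 (hx j)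
  have hαi := hα i
  simp only [sinc_of_ne_zero (hx _), sphericalBesselOneDiv, div_pow _ (_ * _ / _), prod_div_distrib,
    ← mul_prod_erase univ (fun j ↦ (α j * w / 2) ^ 2) (mem_univ i)]
  generalize ∏ j ∈ univ.erase i, (α j * w / 2) ^ 2 = P at hprod ⊢
  field_simp
  ring

theorem Jdet_le_Jdet_of_abs_le {v : ℝ} (hα : ∀ i, α i ≠ 0) (ha : ∀ i, 0 ≤ a i) (hv : v ≠ 0)
    (hvw : |v| ≤ |w|) (hw : ∀ i, |α i * w| ≤ 2 * π) : Jdet d α a w ≤ Jdet d α a v := by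
  have hw0 : w ≠ 0 := abs_pos.1 ((abs_pos.2 hv).trans_le hvw)
  have hle_pi (i : Fin d) : |α i * w / 2| ≤ π := by
    rw [abs_div, abs_two]
    linarith [hw i]
  have hle (i : Fin d) : |α i * v / 2| ≤ |α i * w / 2| := by
    simp only [abs_div, abs_mul]
    gcongr
  have hsinc_nonneg (i : Fin d) : 0 ≤ sinc (α i * w / 2) := sinc_nonneg_of_abs_le_pi (hle_pi i)
  have hsinc_le (i : Fin d) : sinc (α i * w / 2) ≤ sinc (α i * v / 2) :=
    sinc_le_sinc_of_abs_le (hle i) (hle_pi i)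
  rw [Jdet_eq_sum_sinc hα hw0, Jdet_eq_sum_sinc hα hv]
  refine sum_le_sum fun i _ ↦ ?_
  have hai := ha i
  have hbessel_nonneg : 0 ≤ sphericalBesselOneDiv (α i * w / 2) :=
    sphericalBesselOneDiv_nonneg_of_abs_le_pi (hle_pi i)
  have hsinc_nonneg' : 0 ≤ sinc (α i * v / 2) := (hsinc_nonneg i).trans (hsinc_le i)
  have hbessel_le : sphericalBesselOneDiv (α i * w / 2) ≤ sphericalBesselOneDiv (α i * v / 2) :=
    sphericalBesselOneDiv_le_of_abs_le (by simp [hα i, hv]) (hle i) (hle_pi i)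
  gcongr with j
  · exact hsinc_nonneg i
  · exact hsinc_nonneg j
  · exact hsinc_le j
  · exact hsinc_le i

theorem Jdet_scaling_general {t : ℝ} (hα : ∀ i, α i ≠ 0) (ha : ∀ i, 0 ≤ a i) (hw0 : w ≠ 0)
    (hw : ∀ i, |α i * w| ≤ 2 * π) (ht0 : t ≠ 0) (ht1 : |t| ≤ 1) :
    Jdet d α (fun i ↦ t ^ 2 * a i) (t * w) ≥ t ^ 2 * Jdet d α a w := by
  have habs : |t * w| ≤ |w| := by
    rw [abs_mul]
    exact mul_le_of_le_one_left (abs_nonneg w) ht1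
  rw [Jdet_const_mul]
  exact mul_le_mul_of_nonneg_left
    (Jdet_le_Jdet_of_abs_le hα ha (mul_ne_zero ht0 hw0) habs hw) (sq_nonneg t)

theorem abs_mul_le_of_monotone_of_abs_le_div {c : ℝ} (hd : 1 ≤ d) (hα : ∀ i, 0 < α i)
    (hmono : Monotone α) (hw : |w| ≤ c / α ⟨d - 1, Nat.sub_lt hd one_pos⟩) (i : Fin d) :
    |α i * w| ≤ c := by
  have hle_last : α i ≤ α ⟨d - 1, Nat.sub_lt hd one_pos⟩ :=
    hmono (Fin.le_def.2 (Nat.le_sub_one_of_lt i.isLt))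
  calc |α i * w| = α i * |w| := by rw [abs_mul, abs_of_pos (hα i)]
    _ ≤ α ⟨d - 1, Nat.sub_lt hd one_pos⟩ * |w| := by gcongr
    _ ≤ c := (le_div_iff₀' (hα _)).1 hw

end Jacobian

/-- Corollary 3.7 of the paper: the Jacobian determinant of the corank-1 Carnot
exponential map satisfies `J(t·p_x, t·p_z) ≥ t² · J(p_x, p_z)` on the injectivity
domain; in terms of `a i = ‖pⁱ‖²` this reads `J(t²·a, t·w) ≥ t² · J(a, w)`. -/
theorem Jdet_scaling (d : ℕ) (hd : 1 ≤ d) (α : Fin d → ℝ)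
    (hα : ∀ i, 0 < α i) (hmono : Monotone α)
    (a : Fin d → ℝ) (ha : ∀ i, 0 ≤ a i)
    (w : ℝ) (hw0 : w ≠ 0)
    (hw : |w| < 2 * Real.pi / α ⟨d - 1, Nat.sub_lt hd one_pos⟩)
    (t : ℝ) (ht : t ∈ Set.Ioc (0 : ℝ) 1) :
    Jdet d α (fun i => t ^ 2 * a i) (t * w) ≥ t ^ 2 * Jdet d α a w :=
  Jdet_scaling_general (fun i ↦ (hα i).ne') ha hw0
    (abs_mul_le_of_monotone_of_abs_le_div hd hα hmono hw.le) ht.1.ne'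
    ((abs_of_pos ht.1).trans_le ht.2)
end

section
/- Define Ĵ : ℝ^k × ℝ → ℝ by Ĵ(p, w) := (2^{2d}/(α²·w^{2d+2})) · Σ_{i=1}^d ‖pⁱ‖² · (∏_{j≠i} sin²(α_j·w/2)) · sin(α_i·w/2) · (sin(α_i·w/2) − (α_i·w/2)·cos(α_i·w/2)) for w ≠ 0 (with α := ∏ α_i), and Ĵ(p, 0) := (1/12)·Σ_{i=1}^d α_i²·‖pⁱ‖². Then for every ε > 0 there exists a nonempty bounded open set A ⊆ D such that for every t ∈ (0,1): ∫_{t·A} Ĵ dλ < t^{k+3−ε} · ∫_A Ĵ dλ, where t·A := {(t·p, t·w) : (p,w) ∈ A} and λ is the Lebesgue measure on ℝ^k × ℝ ≅ ℝ^{k+1}. (This is the construction showing that a corank-1 Carnot group of rank k does not satisfy MCP(0, k+3−ε).) -/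
open Finset MeasureTheory Pointwise

/-- The phase space `ℝ^k × ℝ` of a corank-1 Carnot group, written in blocks
`(p⁰, p¹, …, p^d, w)` with `p⁰ ∈ ℝ^{k-2d}`, `pⁱ ∈ ℝ²` and `w ∈ ℝ`. -/
abbrev E (d k : ℕ) : Type := (Fin (k - 2 * d) → ℝ) × (Fin d → ℝ × ℝ) × ℝ

/-- The Jacobian determinant `Ĵ` of the exponential map of a corank-1 Carnot
group whose skew-symmetric matrix has nonzero singular values `α 0 ≤ … ≤ α (d-1)`. -/
noncomputable def Jhat (d k : ℕ) (α : Fin d → ℝ) (q : E d k) : ℝ :=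
  if q.2.2 = 0 then
    (1 / 12) * ∑ i, α i ^ 2 * ((q.2.1 i).1 ^ 2 + (q.2.1 i).2 ^ 2)
  else
    2 ^ (2 * d) / ((∏ i, α i) ^ 2 * q.2.2 ^ (2 * d + 2)) *
      ∑ i, ((q.2.1 i).1 ^ 2 + (q.2.1 i).2 ^ 2) *
        (∏ j ∈ univ.erase i, Real.sin (α j * q.2.2 / 2) ^ 2) *
        Real.sin (α i * q.2.2 / 2) *
        (Real.sin (α i * q.2.2 / 2) - α i * q.2.2 / 2 * Real.cos (α i * q.2.2 / 2))

/-!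
Dilating by `t` contributes `t ^ (k + 1)` through Lebesgue measure and `t ^ 2` through the factors
`‖pⁱ‖²`, so what matters is how fast the coefficient of `‖pⁱ‖²`, a function of `w` alone, can drop
between `t * w` and `w`. That coefficient is a product of factors which near `0⁺` behave like powers
of `w`, in the strong sense that `f (t * x) < t ^ s * f x` for all `t ∈ (0, 1)` once `s` is below
the exponent and `x` is small. Such exponents add under products and increase by one under
primitives; starting from `cos` they are `1` for `sin x` and `3` for `sin x - x * cos x`, and the
coefficients end up with exponent `0`. Hence on a small set with `w` close to `0` the scaling
exponent of the integral is at least `k + 3 - ε`.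
-/

open Filter Topology

section LowerIndex

/-- `f` has lower index `a` at `0⁺`: for every `s < a` and all small `x > 0`, shrinking `x` by any
factor `t < 1` makes the positive number `f x` shrink by more than `t ^ s`. This is the lower half
of Zygmund's condition for regular variation; positivity is imposed at the points `t * x`, from
which it follows at `x`. -/
def HasLowerIndexAtZero (f : ℝ → ℝ) (a : ℝ) : Prop :=
  ∀ s < a, ∀ᶠ x in 𝓝[>] 0, ∀ t ∈ Set.Ioo (0 : ℝ) 1, 0 < f (t * x) ∧ f (t * x) < t ^ s * f x

variable {f g : ℝ → ℝ} {a b : ℝ}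

theorem hasLowerIndexAtZero_zpow (n : ℤ) : HasLowerIndexAtZero (fun x ↦ x ^ n) n := by
  intro s hs
  filter_upwards [self_mem_nhdsWithin] with x (hx : 0 < x) t ⟨ht0, ht1⟩
  refine ⟨by positivity, ?_⟩
  rw [mul_zpow, ← Real.rpow_intCast t]
  gcongr
  exact Real.rpow_lt_rpow_of_exponent_gt ht0 ht1 hs

namespace HasLowerIndexAtZero

theorem eventually_pos (hf : HasLowerIndexAtZero f a) : ∀ᶠ x in 𝓝[>] 0, 0 < f x := by
  filter_upwards [hf (a - 1) (by linarith)] with x hx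
  obtain ⟨hpos, hlt⟩ := hx (1 / 2) (by norm_num)
  exact pos_of_mul_pos_right (hpos.trans hlt) (by positivity)

theorem const_mul {c : ℝ} (hc : 0 < c) (hf : HasLowerIndexAtZero f a) :
    HasLowerIndexAtZero (fun x ↦ c * f x) a := by
  intro s hs
  filter_upwards [hf s hs] with x hx t ht
  obtain ⟨hpos, hlt⟩ := hx t ht
  exact ⟨mul_pos hc hpos, by rw [mul_left_comm]; gcongr⟩

theorem comp_const_mul {c : ℝ} (hc : 0 < c) (hf : HasLowerIndexAtZero f a) :
    HasLowerIndexAtZero (fun x ↦ f (c * x)) a := by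
  intro s hs
  have hlim : Tendsto (fun x ↦ c * x) (𝓝[>] 0) (𝓝[>] 0) := by
    refine tendsto_nhdsWithin_iff.2 ⟨?_, ?_⟩
    · exact ((continuous_const_mul c).tendsto' 0 0 (mul_zero c)).mono_left nhdsWithin_le_nhds
    · filter_upwards [self_mem_nhdsWithin] with x hx using mul_pos hc hx
  filter_upwards [hlim.eventually (hf s hs)] with x hx t ht
  simpa only [mul_left_comm] using hx t ht

theorem mul (hf : HasLowerIndexAtZero f a) (hg : HasLowerIndexAtZero g b) :
    HasLowerIndexAtZero (fun x ↦ f x * g x) (a + b) := by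
  intro s hs
  filter_upwards [hf (a - (a + b - s) / 2) (by linarith), hg (b - (a + b - s) / 2) (by linarith)]
    with x hfx hgx t ht
  obtain ⟨hf_pos, hf_lt⟩ := hfx t ht
  obtain ⟨hg_pos, hg_lt⟩ := hgx t ht
  refine ⟨mul_pos hf_pos hg_pos, (mul_lt_mul'' hf_lt hg_lt hf_pos.le hg_pos.le).trans_eq ?_⟩
  rw [mul_mul_mul_comm, ← Real.rpow_add ht.1]
  ring_nf

theorem prod {ι : Type*} {S : Finset ι} {f : ι → ℝ → ℝ} {a : ι → ℝ}
    (hf : ∀ i ∈ S, HasLowerIndexAtZero (f i) (a i)) :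
    HasLowerIndexAtZero (fun x ↦ ∏ i ∈ S, f i x) (∑ i ∈ S, a i) := by
  classical
  induction S using Finset.induction_on with
  | empty => simpa using hasLowerIndexAtZero_zpow 0
  | insert i S hi ih =>
    simp only [prod_insert hi, sum_insert hi]
    exact (hf i (mem_insert_self i S)).mul (ih fun j hj ↦ hf j (mem_insert_of_mem hj))

end HasLowerIndexAtZero

theorem one_add_mul_sub_one_le_rpow_of_nonpos {s t : ℝ} (hs : s ≤ 0) (ht : 0 < t) :
    1 + s * (t - 1) ≤ t ^ s :=
  calc 1 + s * (t - 1) ≤ Real.log t * s + 1 := by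
        nlinarith [mul_le_mul_of_nonpos_left (Real.log_le_sub_one_of_pos ht) hs]
    _ ≤ Real.exp (Real.log t * s) := Real.add_one_le_exp _
    _ = t ^ s := (Real.rpow_def_of_pos ht s).symm

theorem eventually_nhdsGE_forall_mem_Icc {p : ℝ → Prop} {x₀ : ℝ} (hp : ∀ᶠ x in 𝓝[≥] x₀, p x) :
    ∀ᶠ x in 𝓝[>] x₀, ∀ y ∈ Set.Icc x₀ x, p y := by
  obtain ⟨u, hu, hsub⟩ := mem_nhdsGE_iff_exists_Ico_subset.1 hp
  filter_upwards [Ioo_mem_nhdsGT hu] with x hx y hy using hsub ⟨hy.1, hy.2.trans_lt hx.2⟩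

-- The loss `f (t * x) - f x = O((1 - t) * x)` is beaten by the gain `(t ^ s - 1) * f x`, which is
-- at least a multiple of `1 - t`.
theorem hasLowerIndexAtZero_zero_of_lipschitzOnWith {K : NNReal} {U : Set ℝ}
    (hf : LipschitzOnWith K f U) (hU : U ∈ 𝓝[≥] 0) (hf0 : 0 < f 0) :
    HasLowerIndexAtZero f 0 := by
  intro s hs
  have hcont : ContinuousWithinAt f (Set.Ici 0) 0 :=
    (hf.continuousOn 0 (mem_of_mem_nhdsWithin Set.self_mem_Ici hU)).mono_of_mem_nhdsWithin hU
  have hnear : ∀ᶠ x in 𝓝[≥] 0, x ∈ U ∧ f 0 / 2 < f x :=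
    Eventually.and hU (hcont.eventually (lt_mem_nhds (half_lt_self hf0)))
  have hsmall : ∀ᶠ x : ℝ in 𝓝[>] 0, K * x < -s * (f 0 / 2) :=
    nhdsWithin_le_nhds <| (continuous_const_mul (K : ℝ)).tendsto' 0 0 (mul_zero _)
      |>.eventually (gt_mem_nhds (by nlinarith))
  filter_upwards [self_mem_nhdsWithin, eventually_nhdsGE_forall_mem_Icc hnear, hsmall]
    with x (hx : 0 < x) hnear_x hsmall_x t ⟨ht0, ht1⟩
  obtain ⟨hxU, hfx⟩ := hnear_x x ⟨hx.le, le_rfl⟩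
  obtain ⟨htxU, hftx⟩ := hnear_x (t * x) ⟨by positivity, by nlinarith⟩
  have hloss : f (t * x) - f x ≤ K * x * (1 - t) := by
    have := (le_abs_self _).trans (hf.dist_le_mul _ htxU _ hxU)
    rw [Real.dist_eq, abs_sub_comm, abs_of_nonneg (by nlinarith)] at this
    linarith
  have hrpow : -s * (1 - t) ≤ t ^ s - 1 := by
    linarith [one_add_mul_sub_one_le_rpow_of_nonpos hs.le ht0]
  have hgain : -s * (1 - t) * (f 0 / 2) ≤ (t ^ s - 1) * f x :=
    mul_le_mul hrpow hfx.le (by positivity) (by nlinarith)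
  exact ⟨by linarith, by nlinarith⟩

theorem lt_of_forall_hasDerivAt_pos {f' : ℝ → ℝ} (hab : a < b)
    (hf : ∀ x ∈ Set.Icc a b, HasDerivAt f (f' x) x) (hf' : ∀ x ∈ Set.Ioo a b, 0 < f' x) :
    f a < f b := by
  refine strictMonoOn_of_hasDerivWithinAt_pos (f' := f') (convex_Icc a b)
    (fun x hx ↦ (hf x hx).continuousAt.continuousWithinAt)
    (fun x hx ↦ (hf x (interior_subset hx)).hasDerivWithinAt) ?_
    (Set.left_mem_Icc.2 hab.le) (Set.right_mem_Icc.2 hab.le) hab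
  rwa [interior_Icc]

-- For fixed `t`, the function `y ↦ t ^ s * f y - f (t * y)` vanishes at `0` and has derivative
-- `t * (t ^ (s - 1) * f' y - f' (t * y))`.
theorem hasLowerIndexAtZero_add_one_of_hasDerivAt {f' : ℝ → ℝ} (hf0 : f 0 = 0)
    (hderiv : ∀ᶠ x in 𝓝[≥] 0, HasDerivAt f (f' x) x) (hf' : HasLowerIndexAtZero f' a) :
    HasLowerIndexAtZero f (a + 1) := by
  intro s hs
  have hindex := hf'.eventually_pos.and (hf' (s - 1) (by linarith))
  have hindex' := (eventually_nhdsWithin_iff.1 hindex).filter_mono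
    (nhdsWithin_le_nhds (s := Set.Ici 0))
  filter_upwards [self_mem_nhdsWithin, eventually_nhdsGE_forall_mem_Icc (hderiv.and hindex')]
    with x (hx : 0 < x) hall t ⟨ht0, ht1⟩
  have htx : 0 < t * x := mul_pos ht0 hx
  have mem_Icc_of_mul {y : ℝ} (hy : y ∈ Set.Icc 0 x) : t * y ∈ Set.Icc 0 x :=
    ⟨mul_nonneg ht0.le hy.1, (mul_le_of_le_one_left hy.1 ht1.le).trans hy.2⟩
  have hpos : f 0 < f (t * x) := by
    have htx_le : t * x ≤ x := (mem_Icc_of_mul (Set.right_mem_Icc.2 hx.le)).2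
    exact lt_of_forall_hasDerivAt_pos htx
      (fun y hy ↦ (hall y ⟨hy.1, hy.2.trans htx_le⟩).1)
      (fun y hy ↦ ((hall y ⟨hy.1.le, hy.2.le.trans htx_le⟩).2 hy.1).1)
  have hlt : t ^ s * f 0 - f (t * 0) < t ^ s * f x - f (t * x) := by
    refine lt_of_forall_hasDerivAt_pos (f := fun y ↦ t ^ s * f y - f (t * y))
      (f' := fun y ↦ t ^ s * f' y - f' (t * y) * t) hx (fun y hy ↦ ?_) (fun y hy ↦ ?_)
    · have hcomp := (hall (t * y) (mem_Icc_of_mul hy)).1.comp y (hasDerivAt_const_mul t)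
      exact ((hall y hy).1.const_mul _).sub hcomp
    · have hscale := (((hall y ⟨hy.1.le, hy.2.le⟩).2 hy.1).2 t ⟨ht0, ht1⟩).2
      calc 0 < t * (t ^ (s - 1) * f' y - f' (t * y)) := mul_pos ht0 (sub_pos.2 hscale)
        _ = t ^ s * f' y - f' (t * y) * t := by
          rw [Real.rpow_sub_one ht0.ne']
          field_simp
  rw [mul_zero, hf0, mul_zero, sub_zero, sub_pos] at hlt
  exact ⟨hf0 ▸ hpos, hlt⟩

theorem hasLowerIndexAtZero_cos : HasLowerIndexAtZero Real.cos 0 :=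
  hasLowerIndexAtZero_zero_of_lipschitzOnWith Real.lipschitzWith_cos.lipschitzOnWith univ_mem
    (by simp)

theorem hasLowerIndexAtZero_sin : HasLowerIndexAtZero Real.sin 1 := by
  simpa using hasLowerIndexAtZero_add_one_of_hasDerivAt Real.sin_zero
    (.of_forall Real.hasDerivAt_sin) hasLowerIndexAtZero_cos

theorem hasLowerIndexAtZero_sin_sub_mul_cos :
    HasLowerIndexAtZero (fun x ↦ Real.sin x - x * Real.cos x) 3 := by
  have hderiv (x : ℝ) :
      HasDerivAt (fun x ↦ Real.sin x - x * Real.cos x) (x ^ (1 : ℤ) * Real.sin x) x := by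
    convert! (Real.hasDerivAt_sin x).sub ((hasDerivAt_id x).mul (Real.hasDerivAt_cos x)) using 1
    simp
  convert! hasLowerIndexAtZero_add_one_of_hasDerivAt (by simp) (.of_forall hderiv)
    ((hasLowerIndexAtZero_zpow 1).mul hasLowerIndexAtZero_sin) using 1
  norm_num

end LowerIndex

section Dilation

variable {V : Type*} [NormedAddCommGroup V] [NormedSpace ℝ V] [FiniteDimensional ℝ V]
  [MeasurableSpace V] [BorelSpace V] {μ : Measure V} [μ.IsAddHaarMeasure] {t : ℝ}

theorem setLIntegral_smul_set (F : V → ENNReal) (A : Set V) (ht : t ≠ 0) :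
    ∫⁻ x in t • A, F x ∂μ =
      ENNReal.ofReal |t ^ Module.finrank ℝ V| * ∫⁻ x in A, F (t • x) ∂μ := by
  have hemb : MeasurableEmbedding (fun x : V ↦ t • x) := measurableEmbedding_const_smul₀ ht
  have hmap : μ = ENNReal.ofReal |t ^ Module.finrank ℝ V| • μ.map (fun x ↦ t • x) := by
    rw [Measure.map_addHaar_smul μ ht, smul_smul, ← ENNReal.ofReal_mul (abs_nonneg _), ← abs_mul,
      mul_inv_cancel₀ (pow_ne_zero _ ht), abs_one, ENNReal.ofReal_one, one_smul]
  conv_lhs => rw [hmap]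
  rw [Measure.restrict_smul, lintegral_smul_measure, hemb.restrict_map, hemb.lintegral_map,
    ← Set.image_smul, Set.preimage_image_eq A hemb.injective, smul_eq_mul]

theorem setLIntegral_smul_set_lt {F : V → ENNReal} {A : Set V} (hA : MeasurableSet A)
    (hμA : μ A ≠ 0) (hF : Measurable F) (hfin : ∫⁻ x in A, F x ∂μ ≠ ⊤) (ht : t ≠ 0)
    {c : ENNReal} (hc : c ≠ ⊤) (hlt : ∀ x ∈ A, F (t • x) < c * F x) :
    ∫⁻ x in t • A, F x ∂μ <
      ENNReal.ofReal |t ^ Module.finrank ℝ V| * (c * ∫⁻ x in A, F x ∂μ) := by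
  have hcF : ∫⁻ x in A, c * F x ∂μ ≠ ⊤ := by
    rw [lintegral_const_mul c hF]
    exact ENNReal.mul_ne_top hc hfin
  have hle : ∫⁻ x in A, F (t • x) ∂μ ≤ ∫⁻ x in A, c * F x ∂μ :=
    setLIntegral_mono (hF.const_mul c) fun x hx ↦ (hlt x hx).le
  rw [setLIntegral_smul_set F A ht, ← lintegral_const_mul c hF]
  refine ENNReal.mul_lt_mul_right (by positivity) ENNReal.ofReal_ne_top ?_
  exact setLIntegral_strict_mono hA hμA (hF.const_mul c) (ne_top_of_le_ne_top hcF hle)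
    (ae_of_all μ hlt)

end Dilation

section Jacobian

variable {d k : ℕ} {α : Fin d → ℝ}

/-- The coefficient of `‖pⁱ‖²` in `Ĵ(p, w)` for `w ≠ 0`. -/
noncomputable def blockWeight (α : Fin d → ℝ) (i : Fin d) (w : ℝ) : ℝ :=
  2 ^ (2 * d) / ((∏ i, α i) ^ 2 * w ^ (2 * d + 2)) *
    ((∏ j ∈ univ.erase i, Real.sin (α j * w / 2) ^ 2) * Real.sin (α i * w / 2) *
      (Real.sin (α i * w / 2) - α i * w / 2 * Real.cos (α i * w / 2)))

theorem Jhat_of_ne_zero {q : E d k} (hq : q.2.2 ≠ 0) :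
    Jhat d k α q = ∑ i, ((q.2.1 i).1 ^ 2 + (q.2.1 i).2 ^ 2) * blockWeight α i q.2.2 := by
  rw [Jhat, if_neg hq, mul_sum]
  refine sum_congr rfl fun i _ ↦ ?_
  rw [blockWeight]
  ring

theorem Jhat_smul {t : ℝ} {q : E d k} (hq : t * q.2.2 ≠ 0) :
    Jhat d k α (t • q) =
      t ^ 2 * ∑ i, ((q.2.1 i).1 ^ 2 + (q.2.1 i).2 ^ 2) * blockWeight α i (t * q.2.2) := by
  rw [Jhat_of_ne_zero (q := t • q) hq, mul_sum]
  refine sum_congr rfl fun i _ ↦ ?_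
  simp only [Prod.smul_fst, Prod.smul_snd, Pi.smul_apply, smul_eq_mul]
  ring

theorem hasLowerIndexAtZero_blockWeight (hα : ∀ i, 0 < α i) (i : Fin d) :
    HasLowerIndexAtZero (blockWeight α i) 0 := by
  have hsin (j : Fin d) := hasLowerIndexAtZero_sin.comp_const_mul (half_pos (hα j))
  have hsin_sq := HasLowerIndexAtZero.prod (S := univ.erase i) fun j _ ↦ (hsin j).mul (hsin j)
  have hsub := hasLowerIndexAtZero_sin_sub_mul_cos.comp_const_mul (half_pos (hα i))
  have hconst : 0 < 2 ^ (2 * d) / (∏ i, α i) ^ 2 := by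
    have := prod_pos fun i (_ : i ∈ univ) ↦ hα i
    positivity
  convert! (((hasLowerIndexAtZero_zpow (-(2 * d + 2))).mul ((hsin_sq.mul (hsin i)).mul hsub))
    |>.const_mul hconst) using 1
  · ext w
    have hw (j : Fin d) : α j * w / 2 = α j / 2 * w := by ring
    have hpow : w ^ (-(2 * d + 2) : ℤ) = (w ^ (2 * d + 2))⁻¹ := by
      rw [zpow_neg]
      norm_cast
    simp only [blockWeight, hw, hpow, pow_two (Real.sin _)]
    rw [div_mul_eq_div_div, div_eq_mul_inv _ (w ^ _), mul_assoc]
  · have hcard : ((univ.erase i).card : ℝ) = d - 1 := by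
      rw [card_erase_of_mem (mem_univ i), card_fin, Nat.cast_pred i.pos]
    rw [sum_const, nsmul_eq_mul, hcard]
    push_cast
    ring

theorem measurable_Jhat : Measurable (Jhat d k α) := by
  unfold Jhat
  exact Measurable.ite (measurableSet_eq_fun (by fun_prop) measurable_const)
    (by fun_prop) (by fun_prop)

theorem continuousOn_blockWeight (i : Fin d) : ContinuousOn (blockWeight α i) {w | w ≠ 0} := by
  have hne : ∀ w ∈ {w : ℝ | w ≠ 0}, w ^ (2 * d + 2) ≠ 0 := fun w hw ↦ pow_ne_zero _ hw
  unfold blockWeight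
  simp only [div_mul_eq_div_div]
  fun_prop (disch := assumption)

theorem continuousOn_Jhat : ContinuousOn (Jhat d k α) {q | q.2.2 ≠ 0} := by
  refine ContinuousOn.congr (continuousOn_finsetSum _ fun i _ ↦ ?_) fun q hq ↦ Jhat_of_ne_zero hq
  exact ContinuousOn.mul (by fun_prop) <|
    (continuousOn_blockWeight i).comp (by fun_prop) fun q hq ↦ hq

theorem sq_add_sq_pos_of_ne_zero {p : ℝ × ℝ} (hp : p ≠ 0) : 0 < p.1 ^ 2 + p.2 ^ 2 := by
  obtain h | h : p.1 ≠ 0 ∨ p.2 ≠ 0 := by simpa [Prod.ext_iff, imp_iff_not_or] using hp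
  all_goals positivity

theorem eventually_Jhat_smul_lt (hα : ∀ i, 0 < α i) {ε : ℝ} (hε : 0 < ε) :
    ∀ᶠ w in 𝓝[>] 0, ∀ q : E d k, q.2.2 = w → q.2.1 ≠ 0 → ∀ t ∈ Set.Ioo (0 : ℝ) 1,
      0 < Jhat d k α (t • q) ∧ Jhat d k α (t • q) < t ^ (2 - ε) * Jhat d k α q := by
  have hweight := eventually_all.2 fun i ↦ hasLowerIndexAtZero_blockWeight hα i (-ε) (by linarith)
  filter_upwards [self_mem_nhdsWithin, hweight] with w (hw : 0 < w) hlt q rfl hp t ht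
  obtain ⟨i₀, hi₀⟩ := Function.ne_iff.1 hp
  have hnorm (i : Fin d) : 0 ≤ (q.2.1 i).1 ^ 2 + (q.2.1 i).2 ^ 2 := by positivity
  have hnorm_pos : 0 < (q.2.1 i₀).1 ^ 2 + (q.2.1 i₀).2 ^ 2 := sq_add_sq_pos_of_ne_zero hi₀
  have hrpow : t ^ (2 - ε) = t ^ 2 * t ^ (-ε) := by
    rw [← Real.rpow_two, ← Real.rpow_add ht.1, sub_eq_add_neg]
  rw [Jhat_smul (mul_pos ht.1 hw).ne', Jhat_of_ne_zero hw.ne', hrpow, mul_assoc]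
  have hsq : 0 < t ^ 2 := pow_pos ht.1 2
  constructor
  · refine mul_pos hsq (sum_pos' (fun i _ ↦ ?_) ⟨i₀, mem_univ _, ?_⟩)
    · exact mul_nonneg (hnorm i) (hlt i t ht).1.le
    · exact mul_pos hnorm_pos (hlt i₀ t ht).1
  · refine mul_lt_mul_of_pos_left ?_ hsq
    simp only [mul_sum, mul_left_comm (t ^ (-ε))]
    refine sum_lt_sum (fun i _ ↦ ?_) ⟨i₀, mem_univ _, ?_⟩
    · exact mul_le_mul_of_nonneg_left (hlt i t ht).2.le (hnorm i)
    · exact mul_lt_mul_of_pos_left (hlt i₀ t ht).2 hnorm_pos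

theorem finrank_E (hk : 2 * d ≤ k) : Module.finrank ℝ (E d k) = k + 1 := by
  have hblocks : Module.finrank ℝ (Fin d → ℝ × ℝ) = d * 2 := by
    simp [Module.finrank_pi_fintype]
  rw [Module.finrank_prod, Module.finrank_prod, hblocks, Module.finrank_fin_fun,
    Module.finrank_self]
  omega

instance isAddHaarMeasure_volume_E : (volume : Measure (E d k)).IsAddHaarMeasure :=
  have : (volume : Measure ((Fin d → ℝ × ℝ) × ℝ)).IsAddHaarMeasure :=
    Measure.prod.instIsAddHaarMeasure volume volume
  Measure.prod.instIsAddHaarMeasure volume volume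

theorem setLIntegral_Jhat_ne_top {A : Set (E d k)} (hA : IsCompact (closure A))
    (hA0 : ∀ q ∈ closure A, q.2.2 ≠ 0) : ∫⁻ q in A, ENNReal.ofReal (Jhat d k α q) ≠ ⊤ := by
  have hint : IntegrableOn (Jhat d k α) (closure A) :=
    (continuousOn_Jhat.mono hA0).integrableOn_compact hA
  exact (hint.mono_set subset_closure).lintegral_lt_top.ne

theorem setLIntegral_Jhat_smul_set_lt (hk : 2 * d ≤ k) {A : Set (E d k)} (hA_open : IsOpen A)
    (hA_nonempty : A.Nonempty) (hfin : ∫⁻ q in A, ENNReal.ofReal (Jhat d k α q) ≠ ⊤)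
    {t s : ℝ} (ht : 0 < t)
    (hlt : ∀ q ∈ A, 0 < Jhat d k α (t • q) ∧ Jhat d k α (t • q) < t ^ s * Jhat d k α q) :
    ∫⁻ q in t • A, ENNReal.ofReal (Jhat d k α q) <
      ENNReal.ofReal (t ^ (k + 1 + s)) * ∫⁻ q in A, ENNReal.ofReal (Jhat d k α q) := by
  have hlt' : ∀ q ∈ A, ENNReal.ofReal (Jhat d k α (t • q)) <
      ENNReal.ofReal (t ^ s) * ENNReal.ofReal (Jhat d k α q) := fun q hq ↦ by
    obtain ⟨hpos, hlt_q⟩ := hlt q hq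
    rw [← ENNReal.ofReal_mul (Real.rpow_nonneg ht.le s)]
    exact (ENNReal.ofReal_lt_ofReal_iff (hpos.trans hlt_q)).2 hlt_q
  have hvol : |t ^ Module.finrank ℝ (E d k)| * t ^ s = t ^ (k + 1 + s) := by
    rw [finrank_E hk, abs_of_pos (pow_pos ht _), ← Real.rpow_natCast, ← Real.rpow_add ht,
      Nat.cast_succ]
  rw [← hvol, ENNReal.ofReal_mul (abs_nonneg _), mul_assoc]
  exact setLIntegral_smul_set_lt hA_open.measurableSet (hA_open.measure_pos _ hA_nonempty).ne'
    measurable_Jhat.ennreal_ofReal hfin ht.ne' ENNReal.ofReal_ne_top hlt'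

end Jacobian

theorem Jhat_integral_scaling_sharp_general (d k : ℕ) (hd : 1 ≤ d) (hk : 2 * d ≤ k)
    (α : Fin d → ℝ) (hα : ∀ i, 0 < α i) (ε : ℝ) (hε : 0 < ε) (W : ℝ) (hW : 0 < W) :
    ∃ A : Set (E d k), A.Nonempty ∧ IsOpen A ∧ Bornology.IsBounded A ∧
      A ⊆ {q : E d k | |q.2.2| < W ∧ ∃ i, q.2.1 i ≠ 0} ∧
      ∀ t ∈ Set.Ioo (0 : ℝ) 1,
        ∫⁻ q in t • A, ENNReal.ofReal (Jhat d k α q) <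
          ENNReal.ofReal (t ^ ((k : ℝ) + 3 - ε)) *
            ∫⁻ q in A, ENNReal.ofReal (Jhat d k α q) := by
  obtain ⟨δ, hδ, hscale⟩ := mem_nhdsGT_iff_exists_Ioo_subset.1
    ((eventually_Jhat_smul_lt (k := k) hα hε).and (Ioo_mem_nhdsGT hW))
  let U : Set (E d k) := {q | q.2.2 ∈ Set.Ioo 0 δ ∧ q.2.1 ≠ 0}
  have hU : IsOpen U := (isOpen_Ioo.preimage (by fun_prop)).inter (isOpen_ne.preimage (by fun_prop))
  have hU_mem : ((0, fun _ ↦ (1, 0), δ / 2) : E d k) ∈ U :=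
    ⟨⟨half_pos hδ, half_lt_self hδ⟩, Function.ne_iff.2 ⟨⟨0, hd⟩, by simp⟩⟩
  obtain ⟨A, hA_open, hA_mem, hA_sub, hA_compact⟩ := exists_open_between_and_isCompact_closure
    isCompact_singleton hU (Set.singleton_subset_iff.2 hU_mem)
  have hA_nonempty : A.Nonempty := ⟨_, hA_mem rfl⟩
  have hfin := setLIntegral_Jhat_ne_top (α := α) hA_compact fun q hq ↦ (hA_sub hq).1.1.ne'
  refine ⟨A, hA_nonempty, hA_open, hA_compact.isBounded.subset subset_closure,
    fun q hq ↦ ?_, fun t ht ↦ ?_⟩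
  · obtain ⟨hw, hp⟩ := hA_sub (subset_closure hq)
    exact ⟨(abs_of_pos hw.1).trans_lt (hscale hw).2.2, Function.ne_iff.1 hp⟩
  · have hexp : (k : ℝ) + 3 - ε = k + 1 + (2 - ε) := by ring
    rw [hexp]
    refine setLIntegral_Jhat_smul_set_lt hk hA_open hA_nonempty hfin ht.1 fun q hq ↦ ?_
    obtain ⟨hw, hp⟩ := hA_sub (subset_closure hq)
    exact (hscale hw).1 q rfl hp t ht

/-- Step 2 of the proof of Theorem 1.1: for every `ε > 0` there is a nonempty
bounded open subset `A` of the cotangent injectivity domain `D` such that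
`∫_{t·A} Ĵ < t^{k+3-ε} ∫_A Ĵ` for all `t ∈ (0,1)`; this shows that a corank-1
Carnot group of rank `k` does not satisfy `MCP(0, k+3-ε)`. -/
theorem Jhat_integral_scaling_sharp (d k : ℕ) (hd : 1 ≤ d) (hk : 2 * d ≤ k)
    (α : Fin d → ℝ) (hα : ∀ i, 0 < α i) (hmono : Monotone α)
    (ε : ℝ) (hε : 0 < ε) :
    ∃ A : Set (E d k), A.Nonempty ∧ IsOpen A ∧ Bornology.IsBounded A ∧
      A ⊆ {q : E d k |
        |q.2.2| < 2 * Real.pi / α ⟨d - 1, Nat.sub_lt hd one_pos⟩ ∧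
        ∃ i, q.2.1 i ≠ 0} ∧
      ∀ t ∈ Set.Ioo (0 : ℝ) 1,
        ∫⁻ q in t • A, ENNReal.ofReal (Jhat d k α q) <
          ENNReal.ofReal (t ^ ((k : ℝ) + 3 - ε)) *
            ∫⁻ q in A, ENNReal.ofReal (Jhat d k α q) :=
  Jhat_integral_scaling_sharp_general d k hd hk α hα ε hε _ (div_pos Real.two_pi_pos (hα _))
end

section
/- Let n, k, s, m be natural numbers with 1 ≤ k < n, s ≥ 3 and m ≥ s. Let d : {0, 1, …, s} → ℕ be strictly increasing with d(0) = 0, d(1) = k, d(s) = n, and let κ : {0, 1, …, m} → ℕ be nondecreasing with κ(0) = 0, κ(1) = k, κ(m) = n, and κ(i) ≤ d(min(i, s)) for all 0 ≤ i ≤ m. Then Σ_{i=1}^m (2i−1)·(κ(i) − κ(i−1)) > Σ_{i=1}^s i·(d(i) − d(i−1)) + (n − k). -/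
open Finset

/-!
Summation by parts gives `Σ i (f i - f (i - 1)) = Σ_{i < m} (f m - f i)`, so both dimensions are
sums of the codimensions of the terms of a flag:
`𝒩 = (n - κ 0) + 2 (n - κ 1) + 2 Σ_{2 ≤ i < m} (n - κ i)` and
`N_R = (n - d 0) + 2 (n - d 1) + Σ_{2 ≤ i < s} (n - d i)`.
As `κ ≤ d`, the first is at least the second with its last sum doubled, and that sum is positive
exactly because the distribution has step greater than `2`.
-/

section SummationByParts

variable {G : Type*} [AddCommGroup G] (f : ℕ → G)

theorem sum_Icc_sub_pred (m : ℕ) : ∑ i ∈ Icc 1 m, (f i - f (i - 1)) = f m - f 0 := by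
  induction m with
  | zero => simp
  | succ m ih => rw [sum_Icc_succ_top (by omega), ih, Nat.add_sub_cancel, sub_add_sub_cancel']

theorem sum_Icc_nsmul_sub_pred (m : ℕ) :
    ∑ i ∈ Icc 1 m, i • (f i - f (i - 1)) = ∑ i ∈ range m, (f m - f i) := by
  induction m with
  | zero => simp
  | succ m ih =>
    rw [sum_Icc_succ_top (by omega), ih, Nat.add_sub_cancel, sum_range_succ, sum_sub_distrib,
      sum_sub_distrib, sum_const, sum_const, card_range, nsmul_sub, succ_nsmul, succ_nsmul]
    abel

theorem sum_Icc_two_mul_sub_one_nsmul_sub_pred (m : ℕ) :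
    ∑ i ∈ Icc 1 m, (2 * i - 1) • (f i - f (i - 1)) =
      2 • ∑ i ∈ range m, (f m - f i) - (f m - f 0) := by
  rw [← sum_Icc_nsmul_sub_pred, ← sum_Icc_sub_pred, smul_sum, ← sum_sub_distrib]
  refine sum_congr rfl fun i hi ↦ ?_
  have one_le_two_mul : 1 ≤ 2 * i := by have := (mem_Icc.mp hi).1; omega
  rw [sub_nsmul _ one_le_two_mul, one_nsmul, mul_nsmul', ← sub_eq_add_neg]

end SummationByParts

theorem sum_range_eq_add_add_sum_Ico_two {M : Type*} [AddCommMonoid M] (f : ℕ → M) {m : ℕ}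
    (hm : 2 ≤ m) :
    ∑ i ∈ range m, f i = f 0 + f 1 + ∑ i ∈ Ico 2 m, f i := by
  rw [← sum_range_add_sum_Ico f hm, sum_range_succ, sum_range_one]

section Codimensions

variable {G : Type*} [AddCommGroup G] [PartialOrder G] [IsOrderedAddMonoid G]
  {s m : ℕ} {d κ : ℕ → G}

theorem sum_Ico_sub_le_sum_Ico_sub {a : ℕ} (hsm : s ≤ m) (hκm : κ m = d s)
    (hκ : ∀ i ∈ Ico s m, κ i ≤ κ m) (hκd : ∀ i ∈ Ico a s, κ i ≤ d i) :
    ∑ i ∈ Ico a s, (d s - d i) ≤ ∑ i ∈ Ico a m, (κ m - κ i) :=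
  calc ∑ i ∈ Ico a s, (d s - d i)
      ≤ ∑ i ∈ Ico a s, (κ m - κ i) :=
        sum_le_sum fun i hi ↦ hκm ▸ sub_le_sub_left (hκd i hi) _
    _ ≤ ∑ i ∈ Ico a m, (κ m - κ i) := by
        refine sum_le_sum_of_subset_of_nonneg (Ico_subset_Ico_right hsm) fun i hi hi' ↦ ?_
        simp only [mem_Ico] at hi hi'
        exact sub_nonneg.mpr (hκ i (mem_Ico.mpr (by omega)))

theorem geodesic_dim_gt_rifford_bound_general (hsm : s ≤ m) (hd : ∀ i ∈ Ico 2 s, d i ≤ d s)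
    (hd_lt : ∃ i ∈ Ico 2 s, d i < d s) (hκ : ∀ i ∈ Ico s m, κ i ≤ κ m) (hκm : κ m = d s)
    (hκd : ∀ i < s, κ i ≤ d i) :
    ∑ i ∈ Icc 1 m, (2 * i - 1) • (κ i - κ (i - 1)) >
      ∑ i ∈ Icc 1 s, i • (d i - d (i - 1)) + (d s - d 1) := by
  have two_lt : 2 < s := by
    obtain ⟨i, hi, -⟩ := hd_lt
    have := mem_Ico.mp hi
    omega
  have codim_sum_pos : 0 < ∑ i ∈ Ico 2 s, (d s - d i) :=
    sum_pos' (fun i hi ↦ sub_nonneg.mpr (hd i hi))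
      (hd_lt.imp fun _ ⟨hi, hlt⟩ ↦ ⟨hi, sub_pos.mpr hlt⟩)
  have codim_sum_le : ∑ i ∈ Ico 2 s, (d s - d i) ≤ ∑ i ∈ Ico 2 m, (κ m - κ i) :=
    sum_Ico_sub_le_sum_Ico_sub hsm hκm hκ fun i hi ↦ hκd i (mem_Ico.mp hi).2
  have codim_le (i : ℕ) (hi : i < s) : d s - d i ≤ κ m - κ i :=
    hκm ▸ sub_le_sub_left (hκd i hi) _
  calc ∑ i ∈ Icc 1 s, i • (d i - d (i - 1)) + (d s - d 1)
      = (d s - d 0) + 2 • (d s - d 1) + ∑ i ∈ Ico 2 s, (d s - d i) := by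
        rw [sum_Icc_nsmul_sub_pred, sum_range_eq_add_add_sum_Ico_two _ two_lt.le]
        abel
    _ < (d s - d 0) + 2 • (d s - d 1) + 2 • ∑ i ∈ Ico 2 s, (d s - d i) := by
        rw [two_nsmul (∑ i ∈ Ico 2 s, (d s - d i))]
        exact add_lt_add_right (lt_add_of_pos_right _ codim_sum_pos) _
    _ ≤ (κ m - κ 0) + 2 • (κ m - κ 1) + 2 • ∑ i ∈ Ico 2 m, (κ m - κ i) := by
        gcongr ?_ + 2 • ?_ + 2 • ?_
        · exact codim_le 0 (by omega)
        · exact codim_le 1 (by omega)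
    _ = ∑ i ∈ Icc 1 m, (2 * i - 1) • (κ i - κ (i - 1)) := by
        rw [sum_Icc_two_mul_sub_one_nsmul_sub_pred,
          sum_range_eq_add_add_sum_Ico_two _ (two_lt.le.trans hsm)]
        abel

end Codimensions

theorem natCast_sum_Icc_mul_sub_pred {R : Type*} [NonAssocRing R] (w : ℕ → ℕ) {f : ℕ → ℕ} {m : ℕ}
    (hf : ∀ i ∈ Icc 1 m, f (i - 1) ≤ f i) :
    ((∑ i ∈ Icc 1 m, w i * (f i - f (i - 1)) : ℕ) : R) =
      ∑ i ∈ Icc 1 m, w i • ((f i : R) - f (i - 1 : ℕ)) := by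
  rw [Nat.cast_sum]
  refine sum_congr rfl fun i hi ↦ ?_
  rw [Nat.cast_mul, Nat.cast_sub (hf i hi), nsmul_eq_mul]

/-- The combinatorial core of the last part of Theorem 1.10 of the paper: for a
Carnot group of step `s ≥ 3`, rank `k` and dimension `n`, with `d i = dim 𝒟ⁱ`
strictly increasing (dimensions of the flag of the distribution) and
`κ i = dim ℱⁱ` (dimensions of the flag of a generic geodesic), the geodesic
dimension `𝒩 = Σ (2i−1)(κ i − κ (i−1))` is strictly larger than Rifford's
bound `N_R = Q + n − k`, where `Q = Σ i (d i − d (i−1))` is the Hausdorff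
dimension. -/
theorem geodesic_dim_gt_rifford_bound (n k s m : ℕ)
    (hk1 : 1 ≤ k) (hkn : k < n) (hs : 3 ≤ s) (hm : s ≤ m)
    (d κ : ℕ → ℕ)
    (hdmono : ∀ i j, i < j → j ≤ s → d i < d j)
    (hd0 : d 0 = 0) (hd1 : d 1 = k) (hds : d s = n)
    (hκmono : ∀ i j, i ≤ j → j ≤ m → κ i ≤ κ j)
    (hκ0 : κ 0 = 0) (hκ1 : κ 1 = k) (hκm : κ m = n)
    (hκd : ∀ i, i ≤ m → κ i ≤ d (min i s)) :
    ∑ i ∈ Icc 1 m, (2 * i - 1) * (κ i - κ (i - 1)) >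
      ∑ i ∈ Icc 1 s, i * (d i - d (i - 1)) + (n - k) := by
  subst hd1 hds
  have d_mono (i : ℕ) (hi : i ∈ Icc 1 s) : d (i - 1) ≤ d i := by
    rw [mem_Icc] at hi
    exact (hdmono _ _ (by omega) hi.2).le
  have κ_mono (i : ℕ) (hi : i ∈ Icc 1 m) : κ (i - 1) ≤ κ i :=
    hκmono _ _ (Nat.sub_le i 1) (mem_Icc.mp hi).2
  have h_int := geodesic_dim_gt_rifford_bound_general (G := ℤ) (d := (d ·)) (κ := (κ ·)) hm
    (fun i hi ↦ mod_cast (hdmono i s (mem_Ico.mp hi).2 le_rfl).le)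
    ⟨2, mem_Ico.mpr ⟨le_rfl, hs⟩, mod_cast hdmono 2 s hs le_rfl⟩
    (fun i hi ↦ mod_cast hκmono i m (mem_Ico.mp hi).2.le le_rfl)
    (mod_cast hκm)
    (fun i hi ↦ mod_cast (hκd i (hi.le.trans hm)).trans_eq (congrArg d (min_eq_left hi.le)))
  rw [← natCast_sum_Icc_mul_sub_pred _ d_mono, ← natCast_sum_Icc_mul_sub_pred _ κ_mono,
    ← Nat.cast_sub hkn.le] at h_int
  exact_mod_cast h_int
end

section
/- Let K ∈ ℝ and R > 0, and if K > 0 assume additionally that R ≤ π/√K. Then there exists a constant A > 0 such that for every t ∈ [0,1] and every δ ∈ (0, R): s_K(t·δ) ≥ A·t·s_K(δ). -/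
/-- The comparison function `s_K` of constant curvature `K`. -/
noncomputable def sK (K r : ℝ) : ℝ :=
  if 0 < K then Real.sin (Real.sqrt K * r) / Real.sqrt K
  else if K = 0 then r
  else Real.sinh (Real.sqrt (-K) * r) / Real.sqrt (-K)

/-!
For `K > 0` the function `s_K` is concave on `[0, π/√K]` and vanishes at `0`, so
`t * s_K(δ) ≤ s_K(t * δ)` and `A = 1` works. For `K ≤ 0` it is convex on `[0, ∞)`, vanishes at `0`
and lies above its tangent `r` there. Convexity bounds it on `[0, R]` by its chord, so
`(R / s_K(R)) * s_K(δ) ≤ δ`, while the tangent gives `t * δ ≤ s_K(t * δ)`: `A = R / s_K(R)` works.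
-/

open Set
open scoped Real

section ConvexAtZero

variable {𝕜 E β : Type*} [Ring 𝕜] [PartialOrder 𝕜] [IsOrderedAddMonoid 𝕜] [AddCommMonoid E]
  [Module 𝕜 E] [AddCommMonoid β] [PartialOrder β] [IsOrderedAddMonoid β] [Module 𝕜 β]
  [PosSMulMono 𝕜 β] {s : Set E} {f : E → β} {x : E} {t : 𝕜}

theorem map_smul_le_smul_map_of_convexOn (hf : ConvexOn 𝕜 s f) (h0 : 0 ∈ s) (hf0 : f 0 ≤ 0)
    (hx : x ∈ s) (ht : t ∈ Icc 0 1) : f (t • x) ≤ t • f x := by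
  have ht' : 0 ≤ 1 - t := sub_nonneg.2 ht.2
  calc
    f (t • x) = f (t • x + (1 - t) • 0) := by rw [smul_zero, add_zero]
    _ ≤ t • f x + (1 - t) • f 0 := hf.2 hx h0 ht.1 ht' (add_sub_cancel t 1)
    _ ≤ t • f x := add_le_of_nonpos_right (smul_nonpos_of_nonneg_of_nonpos ht' hf0)

theorem smul_map_le_map_smul_of_concaveOn (hf : ConcaveOn 𝕜 s f) (h0 : 0 ∈ s) (hf0 : 0 ≤ f 0)
    (hx : x ∈ s) (ht : t ∈ Icc 0 1) : t • f x ≤ f (t • x) :=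
  map_smul_le_smul_map_of_convexOn hf.dual h0 hf0 hx ht

end ConvexAtZero

theorem convexOn_sinh_Ici : ConvexOn ℝ (Ici 0) Real.sinh := by
  refine MonotoneOn.convexOn_of_deriv (convex_Ici 0) Real.continuous_sinh.continuousOn
    Real.differentiable_sinh.differentiableOn ?_
  rw [Real.deriv_sinh]
  exact Real.cosh_strictMonoOn.monotoneOn.mono interior_subset

section Comparison

variable {K R r t : ℝ}

theorem sK_of_pos (hK : 0 < K) (r : ℝ) : sK K r = (√K)⁻¹ * Real.sin (√K * r) := by
  rw [sK, if_pos hK, div_eq_inv_mul]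

theorem sK_zero_left (r : ℝ) : sK 0 r = r := by
  simp [sK]

theorem sK_of_neg (hK : K < 0) (r : ℝ) : sK K r = (√(-K))⁻¹ * Real.sinh (√(-K) * r) := by
  rw [sK, if_neg hK.not_gt, if_neg hK.ne, div_eq_inv_mul]

theorem sK_zero_right (K : ℝ) : sK K 0 = 0 := by
  simp [sK]

theorem concaveOn_sK_of_pos (hK : 0 < K) : ConcaveOn ℝ (Icc 0 (π / √K)) (sK K) := by
  have hsqrt : 0 < √K := Real.sqrt_pos.2 hK
  have hsin := (strictConcaveOn_sin_Icc.concaveOn.comp_linearMap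
    (LinearMap.mulLeft ℝ √K)).smul (inv_nonneg.2 hsqrt.le)
  refine (hsin.subset (fun r hr ↦ ?_) (convex_Icc _ _)).congr fun r _ ↦ (sK_of_pos hK r).symm
  exact ⟨mul_nonneg hsqrt.le hr.1, (le_div_iff₀' hsqrt).1 hr.2⟩

theorem convexOn_sK_of_nonpos (hK : K ≤ 0) : ConvexOn ℝ (Ici 0) (sK K) := by
  rcases hK.lt_or_eq with hneg | rfl
  · have hsinh := (convexOn_sinh_Ici.comp_linearMap
      (LinearMap.mulLeft ℝ √(-K))).smul (inv_nonneg.2 (Real.sqrt_nonneg (-K)))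
    refine (hsinh.subset (fun r hr ↦ ?_) (convex_Ici _)).congr fun r _ ↦ (sK_of_neg hneg r).symm
    exact mul_nonneg (Real.sqrt_nonneg _) hr
  · exact (convexOn_id (convex_Ici 0)).congr fun r _ ↦ (sK_zero_left r).symm

theorem self_le_sK_of_nonpos (hK : K ≤ 0) (hr : 0 ≤ r) : r ≤ sK K r := by
  rcases hK.lt_or_eq with hneg | rfl
  · have hsqrt : 0 < √(-K) := Real.sqrt_pos.2 (neg_pos.2 hneg)
    rw [sK_of_neg hneg, le_inv_mul_iff₀ hsqrt, Real.self_le_sinh_iff]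
    positivity
  · exact (sK_zero_left r).ge

theorem mul_sK_le_sK_mul_of_pos (hK : 0 < K) (hr : r ∈ Icc 0 (π / √K)) (ht : t ∈ Icc 0 1) :
    t * sK K r ≤ sK K (t * r) :=
  smul_map_le_map_smul_of_concaveOn (concaveOn_sK_of_pos hK) (left_mem_Icc.2 (by positivity))
    (sK_zero_right K).ge hr ht

theorem sK_le_div_mul_sK_of_nonpos (hK : K ≤ 0) (hR : 0 < R) (hr : r ∈ Icc 0 R) :
    sK K r ≤ r / R * sK K R := by
  have hchord : sK K (r / R * R) ≤ r / R * sK K R :=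
    map_smul_le_smul_map_of_convexOn (convexOn_sK_of_nonpos hK) self_mem_Ici (sK_zero_right K).le
      (mem_Ici.2 hR.le) ⟨div_nonneg hr.1 hR.le, div_le_one_of_le₀ hr.2 hR.le⟩
  rwa [div_mul_cancel₀ r hR.ne'] at hchord

theorem div_sK_mul_sK_le_of_nonpos (hK : K ≤ 0) (hR : 0 < R) (hr : r ∈ Icc 0 R) :
    R / sK K R * sK K r ≤ r := by
  have hsR : 0 < sK K R := hR.trans_le (self_le_sK_of_nonpos hK hR.le)
  calc
    R / sK K R * sK K r ≤ R / sK K R * (r / R * sK K R) := by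
      gcongr
      exact sK_le_div_mul_sK_of_nonpos hK hR hr
    _ = r := by field_simp

end Comparison

/-- The uniform comparison estimate used in the proof of Theorem 1.8 of the
paper: for `K ∈ ℝ` and `R > 0` (with `R ≤ π/√K` when `K > 0`) there is a
constant `A > 0` such that `s_K(t·δ) ≥ A·t·s_K(δ)` for all `t ∈ [0,1]` and
`δ ∈ (0, R)`. -/
theorem sK_uniform_comparison (K R : ℝ) (hR : 0 < R)
    (hKR : 0 < K → R ≤ Real.pi / Real.sqrt K) :
    ∃ A : ℝ, 0 < A ∧ ∀ t ∈ Set.Icc (0 : ℝ) 1, ∀ δ ∈ Set.Ioo 0 R,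
      sK K (t * δ) ≥ A * t * sK K δ := by
  rcases lt_or_ge 0 K with hK | hK
  · refine ⟨1, one_pos, fun t ht δ hδ ↦ ?_⟩
    rw [one_mul]
    exact mul_sK_le_sK_mul_of_pos hK ⟨hδ.1.le, hδ.2.le.trans (hKR hK)⟩ ht
  · have hsR : 0 < sK K R := hR.trans_le (self_le_sK_of_nonpos hK hR.le)
    refine ⟨R / sK K R, div_pos hR hsR, fun t ht δ hδ ↦ ?_⟩
    calc
      R / sK K R * t * sK K δ = t * (R / sK K R * sK K δ) := by ring
      _ ≤ t * δ :=
        mul_le_mul_of_nonneg_left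
          (div_sK_mul_sK_le_of_nonpos hK hR (Ioo_subset_Icc_self hδ)) ht.1
      _ ≤ sK K (t * δ) := self_le_sK_of_nonpos hK (mul_nonneg ht.1 hδ.1.le)
end
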